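/- Let G be a finite group of odd order. If the average of the degrees of the irreducible complex characters of G whose degrees are not divisible by 7 is strictly less than 9/5, then G has a normal 7-complement. -/

import Mathlib

open scoped BigOperators

/-- The set of irreducible complex characters of `G`, viewed as functions `G → ℂ`. -/
def Irr (G : Type) [Monoid G] : Set (G → ℂ) :=
  {f | ∃ V : FDRep ℂ G, CategoryTheory.Simple V ∧ f = V.character}

/-- The degree of a character, i.e. its value at the identity (a natural number). -/
noncomputable def charDeg {G : Type} [One G] (f : G → ℂ) : ℕ := ⌊(f 1).re⌋₊

/-- The average of the degrees of the characters in a set `S` of characters. -/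
noncomputable def acd {G : Type} [One G] (S : Set (G → ℂ)) : ℝ :=
  (∑ᶠ f ∈ S, (f 1).re) / (S.ncard : ℝ)

/-- `G` has a normal `p`-complement: a normal subgroup of order coprime to `p`
whose index is a power of `p`. -/
def HasNormalPComplement (p : ℕ) (G : Type) [Group G] : Prop :=
  ∃ N : Subgroup G, N.Normal ∧ Nat.Coprime (Nat.card N) p ∧ ∃ n : ℕ, N.index = p ^ n

/-!
Suppose that `G` has no normal `p`-complement. By Tate's theorem some Sylow `p`-subgroup `P` of `G`
satisfies `P ∩ G' ⊄ P'`, so `N = P ∩ G'` carries a nontrivial linear character `θ` that extends to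
its inertia group `T` in `N_G(N)`, and `T` has index prime to `p`. The induced character has an
irreducible constituent `f` of degree prime to `p`, which is nonlinear because `N ≤ G'`.

If a linear character `μ` of `G` fixes `f`, then `f` also lies over the extension twisted by `μ`.
Vectors of these weights, averaged over the conjugates of `θ`, are linearly independent as `μ`
varies, so the stabilizer of `f` in the group of linear characters has order at most `f 1`.
In odd order only the trivial irreducible character is real (Frobenius–Schur). Hence the orbit of
`f` is disjoint from that of its conjugate, and no irreducible character has degree `2`. So if there
are `n` linear characters, at least `2 n / d` others share the degree `d = f 1 ≥ 3`, and this forces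
the average to be at least `9 / 5`.
-/

section CentralExtensions

open Subgroup
open scoped IsMulCommutative

variable {G E Q B : Type*} [Group G] [Group E] [Group Q] [Group B]

/-- The homomorphism `x ↦ (f x)⁻¹ * g x` comparing two homomorphisms `f` and `g` which become
equal after composition with a homomorphism `π` of central kernel. -/
def centralQuotient {π : Q →* B} (hπ : π.ker ≤ center Q) (f g : G →* Q)
    (hfg : π.comp f = π.comp g) : G →* π.ker :=
  MonoidHom.mk'
    (fun x ↦ ⟨(f x)⁻¹ * g x, by
      simpa [MonoidHom.mem_ker, inv_mul_eq_one] using DFunLike.congr_fun hfg x⟩)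
    fun x y ↦ by
      have hx : (f x)⁻¹ * g x ∈ center Q :=
        hπ (by simpa [MonoidHom.mem_ker, inv_mul_eq_one] using DFunLike.congr_fun hfg x)
      ext
      calc (f (x * y))⁻¹ * g (x * y) = (f y)⁻¹ * ((f x)⁻¹ * g x) * g y := by
            simp only [map_mul, mul_inv_rev, mul_assoc]
        _ = (f x)⁻¹ * g x * ((f y)⁻¹ * g y) := by rw [mem_center_iff.mp hx, mul_assoc _ _ (g y)]

theorem coe_centralQuotient_apply {π : Q →* B} (hπ : π.ker ≤ center Q) (f g : G →* Q)
    (hfg : π.comp f = π.comp g) (x : G) : (centralQuotient hπ f g hfg x : Q) = (f x)⁻¹ * g x :=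
  rfl

theorem isMulCommutative_of_le_center {A : Subgroup E} (hA : A ≤ center E) :
    IsMulCommutative A :=
  ⟨⟨fun a b ↦ Subtype.ext (mem_center_iff.mp (hA b.2) a)⟩⟩

theorem eq_of_mem_commutator_of_comp_eq {π : Q →* B} (hπ : π.ker ≤ center Q) {f g : G →* Q}
    (hfg : π.comp f = π.comp g) {x : G} (hx : x ∈ commutator G) : f x = g x := by
  have := isMulCommutative_of_le_center hπ
  have h := Abelianization.commutator_subset_ker (centralQuotient hπ f g hfg) hx
  rwa [MonoidHom.mem_ker, Subtype.ext_iff, coe_centralQuotient_apply, OneMemClass.coe_one,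
    inv_mul_eq_one] at h

theorem exists_retraction_of_le_center {A H : Subgroup E} (hA : A ≤ center E) (hAH : A ≤ H)
    [H.FiniteIndex] (φ : H →* A) (hφ : ∀ a : A, φ (inclusion hAH a) = a)
    (hcop : (Nat.card A).Coprime H.index) : ∃ θ : E →* A, ∀ a : A, θ a = a := by
  have := isMulCommutative_of_le_center hA
  have htransfer (a : A) : MonoidHom.transfer φ (a : E) = a ^ H.index := by
    rw [MonoidHom.transfer_eq_pow φ (a : E) fun k g _ ↦ by
      rw [mul_assoc, ← mem_center_iff.mp (pow_mem (hA a.2) k), inv_mul_cancel_left]]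
    exact hφ (a ^ H.index)
  let root : A ≃* A := MulEquiv.ofBijective (powMonoidHom H.index) (powCoprime hcop).bijective
  refine ⟨root.symm.toMonoidHom.comp (MonoidHom.transfer φ), fun a ↦ ?_⟩
  exact root.symm_apply_eq.mpr (htransfer a)

theorem exists_section_of_ker_le_center {π : E →* G} (hsurj : Function.Surjective π)
    (hπ : π.ker ≤ center E) {P : Subgroup G} [P.FiniteIndex] {s : P →* E}
    (hs : π.comp s = P.subtype) (hcop : (Nat.card π.ker).Coprime P.index) :
    ∃ S : G →* E, π.comp S = MonoidHom.id G := by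
  have hindex := index_comap_of_surjective P hsurj
  have : (P.comap π).FiniteIndex := ⟨hindex ▸ FiniteIndex.index_ne_zero⟩
  have hker : π.ker ≤ P.comap π := MonoidHom.ker_le_comap π P
  have hagree : π.comp (s.comp (π.subgroupComap P)) = π.comp (P.comap π).subtype := by
    rw [← MonoidHom.comp_assoc, hs]; rfl
  obtain ⟨θ, hθ⟩ := exists_retraction_of_le_center hπ hker (centralQuotient hπ _ _ hagree)
    (fun a ↦ Subtype.ext (by
      have : π.subgroupComap P (inclusion hker a) = 1 := Subtype.ext a.2
      simp [coe_centralQuotient_apply, this]))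
    (hindex ▸ hcop)
  let correct : E →* E := MonoidHom.mk' (fun e ↦ e * (θ e : E)⁻¹) fun a b ↦ by
    have hcomm := mem_center_iff.mp (hπ (inv_mem (θ a).2))
    rw [map_mul, coe_mul, mul_inv_rev, hcomm, mul_assoc, ← mul_assoc b, hcomm b]
    simp only [mul_assoc]
  have hcorrect : π.ker ≤ correct.ker := fun a ha ↦ by
    simpa [correct, MonoidHom.mem_ker, mul_inv_eq_one] using
      congrArg Subtype.val (hθ ⟨a, ha⟩).symm
  refine ⟨π.liftOfSurjective hsurj ⟨correct, hcorrect⟩, ?_⟩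
  rw [← MonoidHom.cancel_right hsurj, MonoidHom.comp_assoc,
    MonoidHom.liftOfRightInverse_comp]
  ext e
  simpa [correct] using MonoidHom.mem_ker.mp (θ e).2

theorem exists_lift_of_ker_le_center {π : Q →* B} (hπ : π.ker ≤ center Q) {r : G →* B}
    (hr : r.range ≤ π.range) {P : Subgroup G} [P.FiniteIndex] {q : P →* Q}
    (hq : π.comp q = r.comp P.subtype) (hcop : (Nat.card π.ker).Coprime P.index) :
    ∃ W : G →* Q, π.comp W = r := by
  let E : Subgroup (G × Q) := (r.comp (.fst G Q)).eqLocus (π.comp (.snd G Q))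
  let fst : E →* G := (MonoidHom.fst G Q).comp E.subtype
  let snd : E →* Q := (MonoidHom.snd G Q).comp E.subtype
  have hE : r.comp fst = π.comp snd := MonoidHom.ext fun e ↦ e.2
  have hfst : Function.Surjective fst := fun g ↦ by
    obtain ⟨y, hy⟩ := hr ⟨g, rfl⟩
    exact ⟨⟨(g, y), hy.symm⟩, rfl⟩
  have hsnd (e : fst.ker) : snd e ∈ π.ker := by
    have := DFunLike.congr_fun hE (e : E)
    simpa [MonoidHom.mem_ker.mp e.2] using this.symm
  have hcenter : fst.ker ≤ center E := fun a ha ↦ mem_center_iff.mpr fun e ↦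
    Subtype.ext (Prod.ext (by
      have : (a : G × Q).1 = 1 := ha
      simp [this]) (mem_center_iff.mp (hπ (hsnd ⟨a, ha⟩)) _))
  have hcard : Nat.card fst.ker ∣ Nat.card π.ker :=
    card_dvd_of_injective ((snd.comp fst.ker.subtype).codRestrict π.ker hsnd) fun a b hab ↦
      Subtype.ext <| Subtype.ext <|
        Prod.ext (a.2.trans b.2.symm) (congrArg Subtype.val hab)
  obtain ⟨S, hS⟩ := exists_section_of_ker_le_center hfst hcenter (P := P)
    (s := (P.subtype.prod q).codRestrict E fun x ↦ (DFunLike.congr_fun hq x).symm)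
    (MonoidHom.ext fun _ ↦ rfl) (hcop.coprime_dvd_left hcard)
  refine ⟨snd.comp S, ?_⟩
  rw [← MonoidHom.comp_assoc, ← hE, MonoidHom.comp_assoc, hS, MonoidHom.comp_id]

end CentralExtensions

section Tate

open Subgroup
open scoped commutatorElement

theorem commutator_top_lt_of_ne_bot {P : Type*} [Group P] [Group.IsNilpotent P] {N : Subgroup P}
    [N.Normal] (hN : N ≠ ⊥) : ⁅N, (⊤ : Subgroup P)⁆ < N := by
  refine (commutator_le_left N ⊤).lt_of_not_ge fun hle ↦ hN ?_
  obtain ⟨n, hn⟩ := Subgroup.nilpotent_iff_lowerCentralSeries.mp ‹Group.IsNilpotent P›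
  have hseries (k : ℕ) : N ≤ (⊤ : Subgroup P).lowerCentralSeries k := by
    induction k with
    | zero => exact le_top
    | succ k ih => exact hle.trans (commutator_mono ih le_rfl)
  exact eq_bot_iff.mpr (hn ▸ hseries n)

theorem map_mk'_commutator_top_le_center {P : Type*} [Group P] (N : Subgroup P) [N.Normal] :
    N.map (QuotientGroup.mk' ⁅N, (⊤ : Subgroup P)⁆) ≤ center _ := by
  rintro _ ⟨x, hx, rfl⟩
  refine mem_center_iff.mpr fun y ↦ ?_
  obtain ⟨y, rfl⟩ := QuotientGroup.mk'_surjective _ y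
  rw [← map_mul, ← map_mul]
  refine QuotientGroup.eq.mpr ?_
  convert commutator_mem_commutator (inv_mem hx) (mem_top y⁻¹) using 1
  simp [commutatorElement_def, mul_assoc]

variable {p : ℕ} [Fact p.Prime] {G : Type*} [Group G]

theorem coprime_pow_index_sylow [Finite G] (P : Sylow p G) (n : ℕ) : (p ^ n).Coprime P.index :=
  .pow_left n ((Fact.out : p.Prime).coprime_iff_not_dvd.mpr P.not_dvd_index)

theorem sylow_sup_eq_top_of_index_eq_pow [Finite G] (P : Sylow p G) {K : Subgroup G} {n : ℕ}
    (hK : K.index = p ^ n) : (P : Subgroup G) ⊔ K = ⊤ := by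
  have hcop : K.index.Coprime P.index := hK ▸ coprime_pow_index_sylow P n
  exact index_eq_one.mp <| Nat.eq_one_of_dvd_coprimes hcop
    (index_dvd_of_le le_sup_right) (index_dvd_of_le le_sup_left)

theorem exists_index_inf_eq_pow {K L : Subgroup G} [K.Normal] {m n : ℕ} (hK : K.index = p ^ m)
    (hL : L.index = p ^ n) : ∃ k, (K ⊓ L).index = p ^ k := by
  have hdvd : (K ⊓ L).index ∣ p ^ (m + n) := by
    rw [← relIndex_mul_index (inf_le_right : K ⊓ L ≤ L), inf_relIndex_right, pow_add, ← hK, ← hL]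
    exact mul_dvd_mul_right (relIndex_dvd_index_of_normal K L) _
  obtain ⟨k, -, hk⟩ := (Nat.dvd_prime_pow Fact.out).mp hdvd
  exact ⟨k, hk⟩

theorem exists_normal_lt_of_subgroupOf_le_commutator [Finite G] (P : Sylow p G) {K : Subgroup G}
    [K.Normal] {n : ℕ} (hK : K.index = p ^ n) (hle : K.subgroupOf P ≤ commutator P)
    (hne : K.subgroupOf P ≠ ⊥) : ∃ L < K, L.Normal ∧ ∃ m, L.index = p ^ m := by
  have : Group.IsNilpotent P := P.2.isNilpotent
  set N := K.subgroupOf P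
  set R := ⁅N, (⊤ : Subgroup P)⁆
  obtain ⟨x, hxN, hxR⟩ := SetLike.exists_of_lt (commutator_top_lt_of_ne_bot hne)
  let toQuot : P →* G ⧸ K := (QuotientGroup.mk' K).comp (P : Subgroup G).subtype
  have hker : toQuot.ker = N := by
    rw [← MonoidHom.comap_ker, QuotientGroup.ker_mk']; rfl
  let π : P ⧸ R →* G ⧸ K := QuotientGroup.lift R toQuot (hker ▸ commutator_le_left N ⊤)
  have hπ : π.ker ≤ center (P ⧸ R) := by
    rw [QuotientGroup.ker_lift, hker]
    exact map_mk'_commutator_top_le_center N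
  have hrange : (QuotientGroup.mk' K).range ≤ π.range := by
    rintro _ ⟨g, rfl⟩
    have hg : g ∈ (P : Subgroup G) ⊔ K := sylow_sup_eq_top_of_index_eq_pow P hK ▸ mem_top g
    obtain ⟨y, hy, k, hk, rfl⟩ := mem_sup_of_normal_right.mp hg
    exact ⟨QuotientGroup.mk' R ⟨y, hy⟩, QuotientGroup.eq.mpr (by simpa using hk)⟩
  have hcop : (Nat.card π.ker).Coprime P.index := by
    obtain ⟨i, hi⟩ := IsPGroup.iff_card.mp ((P.2.to_quotient R).to_subgroup π.ker)
    exact hi ▸ coprime_pow_index_sylow P i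
  obtain ⟨W, hW⟩ := exists_lift_of_ker_le_center hπ hrange (q := QuotientGroup.mk' R)
    (MonoidHom.ext fun _ ↦ rfl) hcop
  have hWx : W x = QuotientGroup.mk' R x :=
    eq_of_mem_commutator_of_comp_eq hπ (f := W.comp (P : Subgroup G).subtype)
      (by rw [← MonoidHom.comp_assoc, hW]; rfl) (hle hxN)
  have hWK : W.ker ≤ K := fun g hg ↦ by
    rw [← QuotientGroup.ker_mk' K, ← hW]
    simp [MonoidHom.mem_ker, MonoidHom.mem_ker.mp hg]
  refine ⟨W.ker, lt_of_le_not_ge hWK fun hge ↦ hxR ?_, inferInstance, ?_⟩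
  · exact (QuotientGroup.eq_one_iff x).mp (hWx.symm.trans (MonoidHom.mem_ker.mp (hge hxN)))
  · rw [index_ker]
    exact IsPGroup.iff_card.mp ((P.2.to_quotient R).to_subgroup W.range)

theorem subgroupOf_le_commutator_of_minimal [Finite G] (P : Sylow p G)
    (hP : (commutator G).subgroupOf P ≤ commutator P) {K : Subgroup G}
    (hK : Minimal (fun L : Subgroup G ↦ L.Normal ∧ ∃ n, L.index = p ^ n) K) :
    K.subgroupOf P ≤ commutator P := by
  obtain ⟨⟨_, n, hn⟩, -⟩ := id hK
  let V := (P : Subgroup G).transferFocal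
  obtain ⟨m, hm⟩ : ∃ m, V.ker.index = p ^ m := by
    rw [index_ker]
    exact IsPGroup.iff_card.mp ((P.2.to_quotient _).to_subgroup V.range)
  have hKV : K ≤ V.ker :=
    (hK.2 ⟨inferInstance, exists_index_inf_eq_pow hn hm⟩ inf_le_left).trans inf_le_right
  refine fun x hx ↦ hP (mem_subgroupOf.mpr (focalSubgroup_le_commutator (P : Subgroup G) ?_))
  rw [← ker_transferFocal_inf_eq_focalSubgroup]
  exact ⟨hKV hx, x.2⟩

/-- A theorem of Tate. -/
theorem hasNormalPComplement_of_subgroupOf_le_commutator {G : Type} [Group G] [Finite G]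
    (P : Sylow p G) (hP : (commutator G).subgroupOf P ≤ commutator P) :
    HasNormalPComplement p G := by
  obtain ⟨K, hK⟩ : ∃ K, Minimal (fun L : Subgroup G ↦ L.Normal ∧ ∃ n, L.index = p ^ n) K :=
    (Set.toFinite _).exists_minimal ⟨⊤, inferInstance, 0, by simp⟩
  obtain ⟨⟨hnormal, n, hn⟩, -⟩ := id hK
  have hbot : K.subgroupOf P = ⊥ := by
    by_contra hne
    obtain ⟨L, hLK, hL⟩ := exists_normal_lt_of_subgroupOf_le_commutator P hn
      (subgroupOf_le_commutator_of_minimal P hP hK) hne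
    exact hLK.not_ge (hK.2 hL hLK.le)
  have hcompl : IsComplement' (P : Subgroup G) K :=
    isComplement'_of_disjoint_and_mul_eq_univ (subgroupOf_eq_bot.mp hbot).symm <| by
      rw [← mul_normal, sylow_sup_eq_top_of_index_eq_pow P hn, coe_top]
  refine ⟨K, hnormal, ?_, n, hn⟩
  rw [← hcompl.symm.index_eq_card, Nat.coprime_comm]
  exact (Fact.out : p.Prime).coprime_iff_not_dvd.mpr P.not_dvd_index

end Tate

section Inertia

open Subgroup

variable {G : Type*} [Group G]

theorem transfer_eq_pow_of_conj {A : Type*} [CommGroup A] {H : Subgroup G} [H.FiniteIndex]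
    (ϕ : H →* A) (h : H)
    (hconj : ∀ (k : ℕ) (g : G) (hk : g⁻¹ * (h : G) ^ k * g ∈ H), ϕ ⟨_, hk⟩ = ϕ h ^ k) :
    MonoidHom.transfer ϕ (h : G) = ϕ h ^ H.index := by
  have : Fintype (G ⧸ H) := H.fintypeQuotientOfFiniteIndex
  have : Fintype (Quotient (MulAction.orbitRel (zpowers (h : G)) (G ⧸ H))) := .ofFinite _
  rw [MonoidHom.transfer_eq_prod_quotient_orbitRel_zpowers_quot,
    index_eq_sum_minimalPeriod H (h : G), ← Finset.prod_pow_eq_pow_sum]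
  exact Finset.prod_congr rfl fun q _ ↦ hconj _ _ _

variable {A : Type*} [CommGroup A]

/-- The inertia group of a linear character `θ` of a subgroup `N`: the elements of the normalizer
of `N` which fix `θ` under conjugation. -/
def inertiaSubgroup (N : Subgroup G) (θ : N →* A) : Subgroup G where
  carrier := {g | ∃ hg : g ∈ normalizer (N : Set G),
    ∀ y, θ (N.normalizerMonoidHom ⟨g, hg⟩ y) = θ y}
  one_mem' := ⟨one_mem _, fun y ↦ congrArg θ (DFunLike.congr_fun N.normalizerMonoidHom.map_one y)⟩
  mul_mem' := by
    rintro a b ⟨ha, hθa⟩ ⟨hb, hθb⟩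
    refine ⟨mul_mem ha hb, fun y ↦ ?_⟩
    have := DFunLike.congr_fun (N.normalizerMonoidHom.map_mul ⟨a, ha⟩ ⟨b, hb⟩) y
    exact (congrArg θ this).trans ((hθa _).trans (hθb y))
  inv_mem' := by
    rintro a ⟨ha, hθ⟩
    refine ⟨inv_mem ha, fun y ↦ ?_⟩
    have := DFunLike.congr_fun (N.normalizerMonoidHom.map_inv ⟨a, ha⟩) y
    refine (congrArg θ this).trans ?_
    rw [← hθ, MulAut.inv_def, MulEquiv.apply_symm_apply]

theorem mem_inertiaSubgroup {N : Subgroup G} {θ : N →* A} {x : normalizer (N : Set G)} :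
    (x : G) ∈ inertiaSubgroup N θ ↔ ∀ y, θ (N.normalizerMonoidHom x y) = θ y :=
  ⟨fun h ↦ h.2, fun h ↦ ⟨x.2, h⟩⟩

theorem le_inertiaSubgroup_comp_inclusion {N P : Subgroup G} (hNP : N ≤ P)
    (hPN : P ≤ normalizer (N : Set G)) (ψ : P →* A) :
    P ≤ inertiaSubgroup N (ψ.comp (inclusion hNP)) := fun g hg ↦ ⟨hPN hg, fun y ↦ by
  have : inclusion hNP (N.normalizerMonoidHom ⟨g, hPN hg⟩ y) =
      ⟨g, hg⟩ * inclusion hNP y * ⟨g, hg⟩⁻¹ := rfl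
  simp only [MonoidHom.comp_apply, this, map_mul, map_inv, mul_inv_cancel_comm]⟩

theorem le_inertiaSubgroup (N : Subgroup G) (θ : N →* A) : N ≤ inertiaSubgroup N θ :=
  le_inertiaSubgroup_comp_inclusion le_rfl le_normalizer θ

theorem exists_extension_of_le_inertiaSubgroup {N P : Subgroup G} [P.FiniteIndex] (hNP : N ≤ P)
    (ψ : P →* A) (hP : P ≤ inertiaSubgroup N (ψ.comp (inclusion hNP)))
    (hcop : (P.relIndex (inertiaSubgroup N (ψ.comp (inclusion hNP)))).Coprime (Nat.card P)) :
    ∃ τ : inertiaSubgroup N (ψ.comp (inclusion hNP)) →* A,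
      ∀ y : N, τ ⟨y, hP (hNP y.2)⟩ = ψ (inclusion hNP y) := by
  set T := inertiaSubgroup N (ψ.comp (inclusion hNP))
  let ψT : P.subgroupOf T →* A := ψ.comp (subgroupOfEquivOfLe hP).toMonoidHom
  have htransfer (y : N) : MonoidHom.transfer ψT ⟨y, hP (hNP y.2)⟩ =
      ψ (inclusion hNP y) ^ P.relIndex T := by
    refine transfer_eq_pow_of_conj ψT ⟨⟨y, hP (hNP y.2)⟩, hNP y.2⟩ fun k t hk ↦ ?_
    have hfix := (T.inv_mem t.2).2 (y ^ k)
    rw [← map_pow]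
    refine Eq.trans (congrArg ψ (Subtype.ext ?_)) hfix
    simpa [subgroupOfEquivOfLe] using (conj_pow (i := k) (a := (t : G)⁻¹) (b := (y : G))).symm
  have hpow : ψ ^ Nat.card P = 1 := MonoidHom.ext fun x ↦ by
    rw [MonoidHom.pow_apply, ← map_pow, pow_card_eq_one', map_one, MonoidHom.one_apply]
  obtain ⟨m, hm⟩ := exists_pow_eq_self_of_coprime
    (hcop.coprime_dvd_right (orderOf_dvd_of_pow_eq_one hpow))
  refine ⟨MonoidHom.transfer ψT ^ m, fun y ↦ ?_⟩
  rw [MonoidHom.pow_apply, htransfer, ← MonoidHom.pow_apply, ← MonoidHom.pow_apply, hm]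

theorem exists_monoidHom_apply_ne_one {P : Type*} [Group P] [Finite P] {x : P}
    (hx : x ∉ commutator P) : ∃ ψ : P →* ℂˣ, ψ x ≠ 1 := by
  have hx' : Abelianization.of x ≠ 1 := fun h ↦ hx ((QuotientGroup.eq_one_iff x).mp h)
  have : NeZero (Monoid.exponent (Abelianization P) : ℂ) :=
    ⟨Nat.cast_ne_zero.mpr Monoid.exponent_ne_zero_of_finite⟩
  obtain ⟨φ, hφ⟩ := CommGroup.exists_apply_ne_one_of_hasEnoughRootsOfUnity _ ℂ hx'
  exact ⟨φ.comp Abelianization.of, hφ⟩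

theorem exists_sylow_normalizer_inf_sup_eq_top (p : ℕ) [Fact p.Prime] [Finite G]
    (N : Subgroup G) [N.Normal] :
    ∃ P : Sylow p G, normalizer ((P ⊓ N : Subgroup G) : Set G) ⊔ N = ⊤ := by
  let Q : Sylow p N := default
  obtain ⟨P, hP⟩ := Q.exists_comap_subtype_eq
  refine ⟨P, ?_⟩
  have hmap : (P ⊓ N : Subgroup G) = (Q : Subgroup N).map N.subtype := by
    rw [← hP, map_comap_eq, range_subtype, inf_comm]
  rw [hmap]
  exact Q.normalizer_sup_eq_top

theorem le_normalizer_inf_of_normal (P N : Subgroup G) [N.Normal] :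
    P ≤ normalizer ((P ⊓ N : Subgroup G) : Set G) := fun g hg ↦ mem_normalizer_iff.mpr fun y ↦
  and_congr (by simp [mul_mem_cancel_left, mul_mem_cancel_right, hg])
    (by simpa [mul_assoc] using ‹N.Normal›.mem_comm_iff (a := y * g⁻¹) (b := g))

theorem exists_extendible_of_not_hasNormalPComplement {p : ℕ} [Fact p.Prime] {G : Type} [Group G]
    [Finite G] (hG : ¬ HasNormalPComplement p G) :
    ∃ (N : Subgroup G) (θ : N →* ℂˣ) (τ : inertiaSubgroup N θ →* ℂˣ), N ≤ commutator G ∧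
      normalizer (N : Set G) ⊔ commutator G = ⊤ ∧ ¬ p ∣ (inertiaSubgroup N θ).index ∧ θ ≠ 1 ∧
      ∀ y : N, τ (inclusion (le_inertiaSubgroup N θ) y) = θ y := by
  obtain ⟨P, hnormalizer⟩ := exists_sylow_normalizer_inf_sup_eq_top p (commutator G)
  obtain ⟨x, hx, hx'⟩ := Set.not_subset.mp
    fun hP ↦ hG (hasNormalPComplement_of_subgroupOf_le_commutator P hP)
  obtain ⟨ψ, hψ⟩ := exists_monoidHom_apply_ne_one hx'
  have hNP : (P ⊓ commutator G : Subgroup G) ≤ P := inf_le_left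
  have hPT := le_inertiaSubgroup_comp_inclusion hNP (le_normalizer_inf_of_normal _ _) ψ
  set θ := ψ.comp (inclusion hNP)
  have hindex := relIndex_mul_index hPT
  obtain ⟨n, hn⟩ := IsPGroup.iff_card.mp P.2
  have hcop : (P.relIndex (inertiaSubgroup _ θ)).Coprime (Nat.card P) :=
    (hn ▸ coprime_pow_index_sylow P n).symm.coprime_dvd_left (Dvd.intro _ hindex)
  obtain ⟨τ, hτ⟩ := exists_extension_of_le_inertiaSubgroup hNP ψ hPT hcop
  refine ⟨_, θ, τ, inf_le_right, hnormalizer,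
    fun h ↦ P.not_dvd_index (h.trans (Dvd.intro_left _ hindex)), fun h ↦ hψ ?_, hτ⟩
  exact DFunLike.congr_fun h ⟨x, x.2, hx⟩

end Inertia

section WeightVectors

open Subgroup Representation

variable {k G V : Type*} [Field k] [Group G] [AddCommGroup V] [Module k V]

theorem eq_zero_of_forall_sum_smul_eq_zero {ι M : Type*} [Fintype ι] [MulOneClass M]
    {χ : ι → M →* k} (hχ : Function.Injective χ) {v : ι → V}
    (h : ∀ m, ∑ i, χ i m • v i = 0) (i : ι) : v i = 0 := by
  refine (Module.forall_dual_apply_eq_zero_iff k (v i)).mp fun l ↦ ?_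
  refine Fintype.linearIndependent_iff.mp ((linearIndependent_monoidHom M k).comp χ hχ)
    (fun j ↦ l (v j)) (funext fun m ↦ ?_) i
  simpa [mul_comm] using congrArg l (h m)

/-- The tensor product of a representation with a linear character, realised on the same space. -/
def twist (ρ : Representation k G V) (μ : G →* kˣ) : Representation k G V where
  toFun g := (μ g : k) • ρ g
  map_one' := by simp
  map_mul' g h := by
    rw [map_mul, map_mul, Units.val_mul, smul_mul_smul_comm]

theorem twist_apply (ρ : Representation k G V) (μ : G →* kˣ) (g : G) (v : V) :
    twist ρ μ g v = (μ g : k) • ρ g v := rfl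

theorem inv_mul_mem_inertiaSubgroup {A : Type*} [CommGroup A] {N : Subgroup G} {θ : N →* A}
    {x y : normalizer (N : Set G)}
    (h : ∀ z, θ (N.normalizerMonoidHom x⁻¹ z) = θ (N.normalizerMonoidHom y⁻¹ z)) :
    (x⁻¹ * y : G) ∈ inertiaSubgroup N θ := by
  refine mem_inertiaSubgroup (x := x⁻¹ * y).mpr fun z ↦ ?_
  rw [map_mul, MulAut.mul_apply, h, map_inv, MulAut.inv_apply_self]

theorem apply_eq_one_of_mem_commutator {A : Type*} [CommGroup A] (μ : G →* A) {g : G}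
    (hg : g ∈ commutator G) : μ g = 1 :=
  Abelianization.commutator_subset_ker μ hg

/-- The cosets of the inertia group of `θ` in the normalizer of `N`; they index the conjugates of
`θ`. -/
abbrev InertiaCosets {A : Type*} [CommGroup A] (N : Subgroup G) (θ : N →* A) : Type _ :=
  normalizer (N : Set G) ⧸ (inertiaSubgroup N θ).subgroupOf (normalizer (N : Set G))

variable {N : Subgroup G} {θ : N →* kˣ} {τ : inertiaSubgroup N θ →* kˣ}

theorem apply_apply_of_weight {ρ : Representation k G V} {w : V}
    (hτ : ∀ y : N, τ (inclusion (le_inertiaSubgroup N θ) y) = θ y)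
    (hw : ∀ t : inertiaSubgroup N θ, ρ t w = (τ t : k) • w) (x : normalizer (N : Set G)) (y : N) :
    ρ y (ρ x w) = (θ (N.normalizerMonoidHom x⁻¹ y) : k) • ρ x w := by
  have hconj : (y : G) * x = x * (N.normalizerMonoidHom x⁻¹ y : N) := by
    change (y : G) * x = x * ((x : G)⁻¹ * y * (x : G)⁻¹⁻¹)
    group
  rw [← Module.End.mul_apply, ← map_mul, hconj, map_mul, Module.End.mul_apply, ← hτ,
    ← map_smul, ← hw]
  rfl

theorem sum_apply_eq_zero_of_sum_translates_eq_zero {ι : Type*} [Fintype ι]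
    {ρ : ι → Representation k G V} {σ : N → Module.End k V} (hρ : ∀ i (y : N), ρ i y = σ y)
    (hτ : ∀ y : N, τ (inclusion (le_inertiaSubgroup N θ) y) = θ y) {w : ι → V}
    (hw : ∀ i (t : inertiaSubgroup N θ), ρ i t (w i) = (τ t : k) • w i)
    [Fintype (InertiaCosets N θ)]
    (h : ∑ q : InertiaCosets N θ, ∑ i, ρ i (q.out : G) (w i) = 0)
    (x : normalizer (N : Set G)) : ∑ i, ρ i (x : G) (w i) = 0 := by
  let χ (q : InertiaCosets N θ) : N →* k :=
    (Units.coeHom k).comp (θ.comp (N.normalizerMonoidHom q.out⁻¹).toMonoidHom)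
  have hχ : Function.Injective χ := fun q q' hq ↦ by
    rw [← q.out_eq', ← q'.out_eq']
    refine QuotientGroup.eq.mpr (mem_subgroupOf.mpr (inv_mul_mem_inertiaSubgroup fun z ↦ ?_))
    exact Units.ext (DFunLike.congr_fun hq z)
  have hσ (y : N) (q : InertiaCosets N θ) : σ y (∑ i, ρ i (q.out : G) (w i)) =
      χ q y • ∑ i, ρ i (q.out : G) (w i) := by
    rw [map_sum, Finset.smul_sum]
    exact Finset.sum_congr rfl fun i _ ↦ hρ i y ▸ apply_apply_of_weight hτ (hw i) q.out y
  have hout := eq_zero_of_forall_sum_smul_eq_zero hχ (v := fun q ↦ ∑ i, ρ i (q.out : G) (w i))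
    fun y ↦ by simp only [← hσ, ← map_sum, h, map_zero]
  obtain ⟨t, ht⟩ := QuotientGroup.mk_out_eq_mul
    ((inertiaSubgroup N θ).subgroupOf (normalizer (N : Set G))) x
  have hx (i : ι) : ρ i ((x : InertiaCosets N θ).out : G) (w i) =
      (τ ⟨t, t.2⟩ : k) • ρ i (x : G) (w i) := by
    rw [ht, Subgroup.coe_mul, map_mul, Module.End.mul_apply, ← map_smul, ← hw]
  refine (smul_eq_zero_iff_right (τ ⟨t, t.2⟩).ne_zero).mp ?_
  simpa only [hx, ← Finset.smul_sum] using hout x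

theorem card_le_finrank_of_weights [FiniteDimensional k V] [(inertiaSubgroup N θ).FiniteIndex]
    {ρ : Representation k G V}
    (hN : N ≤ commutator G) (hG : normalizer (N : Set G) ⊔ commutator G = ⊤)
    (hτ : ∀ y : N, τ (inclusion (le_inertiaSubgroup N θ) y) = θ y) (Λ : Finset (G →* kˣ))
    (hw : ∀ μ ∈ Λ, ∃ w ≠ 0, ∀ t : inertiaSubgroup N θ, ρ t w = (τ t * μ t : kˣ) • w) :
    Λ.card ≤ Module.finrank k V := by
  choose! w hw0 hw using hw
  let ρ' (μ : Λ) : Representation k G V := twist ρ μ.1⁻¹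
  have hρ' (μ : Λ) (y : N) : ρ' μ y = ρ y := by
    ext v
    simp [ρ', twist_apply, apply_eq_one_of_mem_commutator μ.1 (hN y.2)]
  have := Fintype.ofFinite (InertiaCosets N θ)
  let v (μ : Λ) : V := ∑ q : InertiaCosets N θ, ρ' μ (q.out : G) (w μ)
  suffices hv : LinearIndependent k v by simpa using hv.fintype_card_le_finrank
  refine Fintype.linearIndependent_iff.mpr fun c hc ↦ ?_
  have hweight (μ : Λ) (t : inertiaSubgroup N θ) :
      ρ' μ t (c μ • w μ) = (τ t : k) • c μ • w μ := by
    rw [map_smul, twist_apply, hw μ μ.2, ← Units.smul_def, smul_smul, MonoidHom.inv_apply,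
      inv_mul_cancel_comm_assoc, ← Units.smul_def, smul_comm]
  have hX := sum_apply_eq_zero_of_sum_translates_eq_zero hρ' hτ hweight
    (by rw [Finset.sum_comm]; simpa [v, Finset.smul_sum] using hc)
  have hχ : Function.Injective fun μ : Λ ↦ (Units.coeHom k).comp μ.1⁻¹ := fun μ μ' h ↦
    Subtype.ext (inv_injective (MonoidHom.ext fun g ↦ Units.ext (DFunLike.congr_fun h g)))
  have hcw := eq_zero_of_forall_sum_smul_eq_zero hχ (v := fun μ ↦ c μ • w μ) fun g ↦ by
    obtain ⟨x, hx, y, hy, rfl⟩ := mem_sup_of_normal_right.mp (hG.ge (mem_top g))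
    have hxw : ρ x (∑ μ : Λ, (μ.1⁻¹ x : k) • c μ • w μ) = 0 := by
      rw [map_sum, ← hX ⟨x, hx⟩]
      exact Finset.sum_congr rfl fun μ _ ↦ map_smul _ _ _
    simpa [apply_eq_one_of_mem_commutator _ hy] using
      (map_eq_zero_iff _ (ρ.apply_bijective x).injective).mp hxw
  exact fun μ ↦ (smul_eq_zero.mp (hcw μ)).resolve_right (hw0 μ μ.2)

end WeightVectors

section Constituents

open Subgroup Representation

variable {k G : Type*} [Field k] [Group G]

/-- Elements of a coinduced module are determined by arbitrary values on a right transversal. -/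
noncomputable def coindVEquivTransversal {A : Type*} [AddCommGroup A] [Module k A]
    {T : Subgroup G} (σ : Representation k T A) {S : Set G}
    (hS : IsComplement (T : Set G) S) : coindV T.subtype σ ≃ₗ[k] (S → A) where
  toFun f s := f.1 s
  map_add' _ _ := rfl
  map_smul' _ _ := rfl
  invFun F := ⟨fun g ↦ σ (hS.equiv g).1 (F (hS.equiv g).2), fun t g ↦ by
    simp only [Subgroup.subtype_apply, hS.equiv_mul_left, map_mul, Module.End.mul_apply]⟩
  left_inv f := Subtype.ext (funext fun g ↦ by
    simp only [← f.2 (hS.equiv g).1, Subgroup.subtype_apply, hS.equiv_fst_mul_equiv_snd])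
  right_inv F := funext fun s ↦ by
    simp only [hS.equiv_fst_eq_one_of_mem_of_one_mem T.one_mem s.2,
      hS.equiv_snd_eq_self_of_mem_of_one_mem T.one_mem s.2]
    exact LinearMap.congr_fun (map_one σ) (F s)

theorem finrank_coindV {A : Type*} [AddCommGroup A] [Module k A] [FiniteDimensional k A]
    (T : Subgroup G) [T.FiniteIndex] (σ : Representation k T A) :
    Module.finrank k (coindV T.subtype σ) = T.index * Module.finrank k A := by
  obtain ⟨S, hS, -⟩ := T.exists_isComplement_right 1
  have : Finite S := Nat.finite_of_card_ne_zero (hS.card_right ▸ FiniteIndex.index_ne_zero)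
  have := Fintype.ofFinite S
  rw [(coindVEquivTransversal σ hS).finrank_eq, Module.finrank_pi_fintype]
  simp [← hS.card_right]

theorem exists_subrepresentation_ne_top_not_dvd_finrank [Finite G] [NeZero (Nat.card G : k)]
    {V : Type*} [AddCommGroup V] [Module k V] [FiniteDimensional k V] {p : ℕ}
    {ρ : Representation k G V} (hρ : ¬ ρ.IsIrreducible) (hp : ¬ p ∣ Module.finrank k V) :
    ∃ U : Subrepresentation ρ, U ≠ ⊤ ∧ ¬ p ∣ Module.finrank k U.toSubmodule := by
  have hV : Module.finrank k V ≠ 0 := fun h ↦ hp (h ▸ dvd_zero p)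
  have : Nontrivial (Subrepresentation ρ) := ⟨⊥, ⊤, fun h ↦ hV (by
    rw [← finrank_top k V, ← finrank_bot k V]
    exact congrArg (fun U : Subrepresentation ρ ↦ Module.finrank k U.toSubmodule) h.symm)⟩
  obtain ⟨U, hU⟩ : ∃ U : Subrepresentation ρ, ¬ (U = ⊥ ∨ U = ⊤) := by
    by_contra! h
    exact hρ ⟨h⟩
  push Not at hU
  obtain ⟨U', hc⟩ := exists_isCompl U
  by_cases hpU : p ∣ Module.finrank k U.toSubmodule
  · refine ⟨U', fun h ↦ hU.1 (eq_bot_of_top_isCompl (h ▸ hc.symm)), fun hpU' ↦ hp ?_⟩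
    have hsup : U.toSubmodule ⊔ U'.toSubmodule = ⊤ :=
      congrArg Subrepresentation.toSubmodule hc.sup_eq_top
    have hinf : U.toSubmodule ⊓ U'.toSubmodule = ⊥ :=
      congrArg Subrepresentation.toSubmodule hc.inf_eq_bot
    have := Submodule.finrank_sup_add_finrank_inf_eq U.toSubmodule U'.toSubmodule
    rw [hsup, hinf, finrank_top, finrank_bot, add_zero] at this
    exact this ▸ dvd_add hpU hpU'
  · exact ⟨U, hU.2, hpU⟩

theorem exists_isIrreducible_not_dvd_finrank.{u} [Finite G] [NeZero (Nat.card G : k)]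
    {V : Type u} [AddCommGroup V] [Module k V] [FiniteDimensional k V]
    {p : ℕ} (ρ : Representation k G V) (hp : ¬ p ∣ Module.finrank k V) :
    ∃ (W : Type u) (_ : AddCommGroup W) (_ : Module k W) (σ : Representation k G W)
      (f : IntertwiningMap σ ρ), Function.Injective f ∧ σ.IsIrreducible ∧
        ¬ p ∣ Module.finrank k W := by
  induction hn : Module.finrank k V using Nat.strong_induction_on generalizing V with | _ n ih
  by_cases hρ : ρ.IsIrreducible
  · exact ⟨V, _, _, ρ, .id ρ, Function.injective_id, hρ, hp⟩
  obtain ⟨U, hU, hpU⟩ := exists_subrepresentation_ne_top_not_dvd_finrank hρ hp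
  have hlt : Module.finrank k U.toSubmodule < n :=
    hn ▸ Submodule.finrank_lt fun h ↦ hU (Subrepresentation.toSubmodule_injective h)
  let ι : IntertwiningMap U.toRepresentation ρ := ⟨U.toSubmodule.subtype, fun _ ↦ rfl⟩
  obtain ⟨W, _, _, σ, f, hf, hσ⟩ := ih _ hlt U.toRepresentation hpU rfl
  exact ⟨W, _, _, σ, ι.comp f, Subtype.val_injective.comp hf, hσ⟩

variable {T V : Type*} [Group T] [Finite T] [AddCommGroup V] [Module k V]

theorem exists_weight_vector_of_functional [NeZero (Nat.card T : k)] (ρ : Representation k T V)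
    (τ : T →* kˣ) {l : Module.Dual k V} (hl : l ≠ 0) (h : ∀ t v, l (ρ t v) = τ t * l v) :
    ∃ w ≠ 0, ∀ t, ρ t w = τ t • w := by
  have := Fintype.ofFinite T
  obtain ⟨v, hv⟩ := DFunLike.ne_iff.mp hl
  refine ⟨∑ t, (τ t)⁻¹ • ρ t v, fun h0 ↦ ?_, fun s ↦ ?_⟩
  · have : (Nat.card T : k) * l v = 0 := by
      rw [← map_zero l, ← h0]
      simp [Units.smul_def, h]
    exact (mul_ne_zero (NeZero.ne _) hv) this
  · rw [map_sum, Finset.smul_sum, ← Equiv.sum_comp (Equiv.mulLeft s) fun t ↦ τ s • (τ t)⁻¹ • ρ t v]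
    refine Finset.sum_congr rfl fun t _ ↦ ?_
    rw [Equiv.coe_mulLeft, map_mul, map_mul, mul_inv, smul_smul, mul_inv_cancel_left,
      Module.End.mul_apply, Units.smul_def, map_smul, Units.smul_def]

theorem character_twist_apply {M : Type*} [Group M] (ρ : Representation k M V) (μ : M →* kˣ)
    (m : M) : (twist ρ μ).character m = μ m * ρ.character m :=
  map_smul (LinearMap.trace k V) _ _

theorem exists_weight_vector_iff [FiniteDimensional k V] [CharZero k] (ρ : Representation k T V)
    (τ : T →* kˣ) :
    (∃ w ≠ 0, ∀ t, ρ t w = τ t • w) ↔ ∑ᶠ t, (τ⁻¹ t : k) * ρ.character t ≠ 0 := by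
  have := Fintype.ofFinite T
  have hcard : (Nat.card T : k) ≠ 0 := by simp
  have := invertibleOfNonzero hcard
  have hmem (w : V) : w ∈ (twist ρ τ⁻¹).invariants ↔ ∀ t, ρ t w = τ t • w := by
    simp only [mem_invariants, twist_apply, MonoidHom.inv_apply, ← Units.smul_def, inv_smul_eq_iff]
  have hrank := card_inv_mul_sum_char_eq_finrank (twist ρ τ⁻¹)
  simp only [character_twist_apply] at hrank
  rw [finsum_eq_sum_of_fintype, ← mul_ne_zero_iff_left (inv_ne_zero hcard), hrank,
    Nat.cast_ne_zero, Ne, Submodule.finrank_eq_zero, ← Ne, Submodule.ne_bot_iff]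
  simp only [hmem, and_comm]

theorem exists_isIrreducible_weight_vector.{u, v} {k : Type u} {G : Type v} [Field k] [CharZero k]
    [Group G] [Finite G] {p : ℕ} (T : Subgroup G) (hT : ¬ p ∣ T.index) (τ : T →* kˣ) :
    ∃ (W : Type (max u v)) (_ : AddCommGroup W) (_ : Module k W) (σ : Representation k G W),
      FiniteDimensional k W ∧ σ.IsIrreducible ∧ ¬ p ∣ Module.finrank k W ∧
        ∃ w ≠ 0, ∀ t : T, σ t w = τ t • w := by
  let ρ := coind T.subtype (twist (.trivial k T k) τ)
  have hρ : ¬ p ∣ Module.finrank k (coindV T.subtype (twist (.trivial k T k) τ)) := by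
    rwa [finrank_coindV, Module.finrank_self, mul_one]
  obtain ⟨W, _, _, σ, f, hf, hσ, hpW⟩ := exists_isIrreducible_not_dvd_finrank ρ hρ
  have hW : FiniteDimensional k W := .of_injective f.toLinearMap hf
  have hW0 : Nontrivial W := Module.nontrivial_of_finrank_pos (R := k) <|
    Nat.pos_of_ne_zero fun h ↦ hpW (h ▸ dvd_zero p)
  obtain ⟨w, hw⟩ := exists_ne (0 : W)
  obtain ⟨g, hg⟩ : ∃ g, (f w).1 g ≠ 0 := by
    by_contra! h
    exact hw (hf ((map_zero f).symm ▸ Subtype.ext (funext h)))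
  let l : Module.Dual k W := (LinearMap.proj 1).comp ((Submodule.subtype _).comp f.toLinearMap)
  have hl (x : G) (v : W) : l (σ x v) = (f v).1 x := by
    change (f (σ x v)).1 1 = _
    rw [f.isIntertwining]
    exact congrArg (f v).1 (one_mul x)
  have hlt (t : T) (v : W) : l (σ t v) = τ t * l v := by
    rw [hl]
    exact (congrArg (f v).1 (mul_one (t : G)).symm).trans ((f v).2 t 1)
  exact ⟨W, _, _, σ, hW, hσ, hpW, exists_weight_vector_of_functional (σ.comp T.subtype) τ
    (fun h ↦ hg (by rw [← hl, h, LinearMap.zero_apply])) hlt⟩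

end Constituents

section FrobeniusSchur

open Representation TensorProduct

variable {k G V : Type*} [Field k] [Group G] [AddCommGroup V] [Module k V] [FiniteDimensional k V]

theorem trace_comm_comp_map (A B : V →ₗ[k] V) :
    LinearMap.trace k (V ⊗[k] V) (TensorProduct.comm k V V ∘ₗ TensorProduct.map A B) =
      LinearMap.trace k V (A ∘ₗ B) := by
  classical
  let b := Module.finBasis k V
  rw [LinearMap.trace_eq_matrix_trace k (b.tensorProduct b), LinearMap.trace_eq_matrix_trace k b,
    LinearMap.toMatrix_comp b b b, Matrix.trace, Matrix.trace, Fintype.sum_prod_type_right]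
  simp [Matrix.mul_apply, LinearMap.toMatrix_apply]

theorem trace_comm_comp_averageMap [Fintype G] [Invertible (Fintype.card G : k)]
    (ρ : Representation k G V) :
    LinearMap.trace k (V ⊗[k] V) (TensorProduct.comm k V V ∘ₗ (tprod ρ ρ).averageMap) =
      ⅟(Fintype.card G : k) * ∑ g, ρ.character (g ^ 2) := by
  rw [← LinearMap.compRight_apply k]
  simp only [averageMap, GroupAlgebra.average, map_smul, map_sum, asAlgebraHom_of, smul_eq_mul,
    LinearMap.compRight_apply, Representation.tprod_apply, trace_comm_comp_map, character, pow_two,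
    map_mul, Module.End.mul_eq_comp]

theorem sum_character_pow_two_ne_zero [Fintype G] [CharZero k] {ρ : Representation k G V}
    (h : ∑ g, ρ.character g * ρ.character g = Nat.card G) : ∑ g, ρ.character (g ^ 2) ≠ 0 := by
  have hcard : (Nat.card G : k) ≠ 0 := by simp
  have := invertibleOfNonzero hcard
  have : Invertible (Fintype.card G : k) := by rwa [Fintype.card_eq_nat_card]
  let I := (tprod ρ ρ).invariants
  have hπ : LinearMap.IsProj I (tprod ρ ρ).averageMap := isProj_averageMap _
  have hrank : Module.finrank k I = 1 := by
    have := card_inv_mul_sum_char_eq_finrank (tprod ρ ρ)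
    simp only [char_tensor, Pi.mul_apply, h, inv_mul_cancel₀ hcard] at this
    exact_mod_cast this.symm
  have hswap (v) (hv : v ∈ I) : TensorProduct.comm k V V v ∈ I := fun g ↦ by
    conv_rhs => rw [← hv g]
    exact LinearMap.congr_fun (TensorProduct.map_comp_comm_eq (ρ g) (ρ g)) v
  obtain ⟨⟨v, hvI⟩, hv0, hv⟩ := finrank_eq_one_iff'.mp hrank
  obtain ⟨ε, hε⟩ := hv ⟨_, hswap v hvI⟩
  replace hε : ε • v = TensorProduct.comm k V V v := congrArg Subtype.val hε
  have hε0 : ε ≠ 0 := by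
    rintro rfl
    rw [zero_smul, eq_comm, LinearEquiv.map_eq_zero_iff] at hε
    exact hv0 (Subtype.ext hε)
  have hcomp : TensorProduct.comm k V V ∘ₗ (tprod ρ ρ).averageMap =
      ε • (tprod ρ ρ).averageMap := by
    refine LinearMap.ext fun x ↦ ?_
    obtain ⟨c, hc⟩ := hv ⟨_, hπ.map_mem x⟩
    replace hc : c • v = (tprod ρ ρ).averageMap x := congrArg Subtype.val hc
    simp only [LinearMap.comp_apply, LinearEquiv.coe_coe, LinearMap.smul_apply, ← hc, map_smul,
      ← hε, smul_comm ε c]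
  have htrace := trace_comm_comp_averageMap ρ
  rw [hcomp, map_smul, hπ.trace, hrank, Nat.cast_one, smul_eq_mul, mul_one] at htrace
  exact right_ne_zero_of_mul (htrace ▸ hε0)

end FrobeniusSchur

section DeterminantCharacter

open Representation

variable {k G V : Type*} [Field k] [Group G] [AddCommGroup V] [Module k V]

/-- The linear character `g ↦ det (ρ g)` of a representation `ρ`. -/
noncomputable def detHom (ρ : Representation k G V) : G →* kˣ :=
  (LinearMap.det.comp ρ).toHomUnits

theorem detHom_apply (ρ : Representation k G V) (g : G) : (detHom ρ g : k) = LinearMap.det (ρ g) :=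
  rfl

theorem eq_detHom_smul_id {ρ : Representation k G V} (h : Module.finrank k V = 1) (g : G) :
    ρ g = (detHom ρ g : k) • LinearMap.id := by
  obtain ⟨c, hc, -⟩ := LinearMap.existsUnique_eq_smul_id_of_finrank_eq_one h (ρ g)
  rw [detHom_apply, hc, LinearMap.det_smul, h, pow_one, LinearMap.det_id, mul_one]

theorem character_eq_detHom {ρ : Representation k G V} (h : Module.finrank k V = 1) (g : G) :
    ρ.character g = detHom ρ g := by
  have := Module.finite_of_finrank_pos (R := k) (M := V) (h ▸ one_pos)
  rw [character, eq_detHom_smul_id h, map_smul, LinearMap.trace_id, h, Nat.cast_one, smul_eq_mul,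
    mul_one]

theorem character_inv_of_finrank_eq_two {ρ : Representation k G V} (h : Module.finrank k V = 2)
    (g : G) : ρ.character g⁻¹ = (detHom ρ)⁻¹ g * ρ.character g := by
  have := Module.finite_of_finrank_pos (R := k) (M := V) (h ▸ two_pos)
  let b := Module.finBasisOfFinrankEq k V h
  let M : Matrix (Fin 2) (Fin 2) k := LinearMap.toMatrix b b (ρ g)
  have hinv : LinearMap.toMatrix b b (ρ g⁻¹) = M⁻¹ := by
    refine (Matrix.inv_eq_right_inv ?_).symm
    rw [← LinearMap.toMatrix_mul, ← map_mul, mul_inv_cancel, map_one, LinearMap.toMatrix_one]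
  rw [MonoidHom.inv_apply, Units.val_inv_eq_inv_val, detHom_apply, character, character,
    LinearMap.trace_eq_matrix_trace k b, LinearMap.trace_eq_matrix_trace k b, hinv,
    ← LinearMap.det_toMatrix b, Matrix.inv_def, Matrix.trace_smul, Matrix.adjugate_fin_two,
    Matrix.trace_fin_two, Matrix.trace_fin_two, Ring.inverse_eq_inv']
  simp [M, add_comm]

end DeterminantCharacter

section IrreducibleCharacters

open Representation

variable {G : Type} [Group G]

theorem character_mem_Irr_iff [Fintype G] {V : Type} [AddCommGroup V] [Module ℂ V]
    [FiniteDimensional ℂ V] {ρ : Representation ℂ G V} :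
    ρ.character ∈ Irr G ↔ ∑ g, ρ.character g * ρ.character g⁻¹ = Nat.card G := by
  refine ⟨?_, fun h ↦ ⟨.of ρ, (FDRep.simple_iff_char_is_norm_one _).mpr h, rfl⟩⟩
  rintro ⟨W, hW, h⟩
  rw [h]
  exact (FDRep.simple_iff_char_is_norm_one W).mp hW

theorem exists_character_eq_of_mem_Irr {f : G → ℂ} (hf : f ∈ Irr G) :
    ∃ (V : Type) (_ : AddCommGroup V) (_ : Module ℂ V) (_ : FiniteDimensional ℂ V)
      (ρ : Representation ℂ G V), ρ.character = f := by
  obtain ⟨V, -, rfl⟩ := hf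
  exact ⟨V, _, _, inferInstance, V.ρ, rfl⟩

theorem sum_mul_inv_of_mem_Irr [Fintype G] {f : G → ℂ} (hf : f ∈ Irr G) :
    ∑ g, f g * f g⁻¹ = Nat.card G := by
  obtain ⟨V, _, _, _, ρ, rfl⟩ := exists_character_eq_of_mem_Irr hf
  exact character_mem_Irr_iff.mp hf

theorem character_mem_Irr [Finite G] {V : Type} [AddCommGroup V] [Module ℂ V]
    [FiniteDimensional ℂ V] {ρ : Representation ℂ G V} (hρ : ρ.IsIrreducible) :
    ρ.character ∈ Irr G := by
  have := Fintype.ofFinite G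
  have hcard : (Nat.card G : ℂ) ≠ 0 := by simp
  have := invertibleOfNonzero hcard
  have h := char_orthonormal ρ ρ
  rw [if_pos ⟨.refl ρ⟩, inv_mul_eq_iff_eq_mul₀ hcard, mul_one] at h
  exact character_mem_Irr_iff.mpr h

theorem sum_mul_inv_eq_zero_of_mem_Irr [Fintype G] {f f' : G → ℂ} (hf : f ∈ Irr G)
    (hf' : f' ∈ Irr G) (hne : f ≠ f') : ∑ g, f g * f' g⁻¹ = 0 := by
  classical
  obtain ⟨V, hV, rfl⟩ := hf
  obtain ⟨W, hW, rfl⟩ := hf'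
  have hcard : (Nat.card G : ℂ) ≠ 0 := by simp
  have := invertibleOfNonzero hcard
  have h := FDRep.char_orthonormal V W
  rw [if_neg fun ⟨i⟩ ↦ hne (FDRep.char_iso i)] at h
  exact (mul_eq_zero.mp h).resolve_left (inv_ne_zero hcard)

theorem finite_Irr [Finite G] : (Irr G).Finite := by
  have := Fintype.ofFinite G
  have hli : LinearIndependent ℂ (Subtype.val : Irr G → G → ℂ) := by
    refine linearIndependent_iff'.mpr fun s c hs f hf ↦ ?_
    have h : ∑ g, (∑ i ∈ s, c i • i.1) g * f.1 g⁻¹ = 0 := by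
      simp only [hs, Pi.zero_apply, zero_mul, Finset.sum_const_zero]
    simp only [Finset.sum_apply, Pi.smul_apply, smul_eq_mul, Finset.sum_mul, mul_assoc] at h
    rw [Finset.sum_comm] at h
    simp only [← Finset.mul_sum] at h
    rw [Finset.sum_eq_single_of_mem f hf, sum_mul_inv_of_mem_Irr f.2] at h
    · simpa using h
    · exact fun i _ hi ↦ by
        rw [sum_mul_inv_eq_zero_of_mem_Irr i.2 f.2 (Subtype.coe_ne_coe.mpr hi), mul_zero]
  exact Set.finite_coe_iff.mp hli.finite

/-- The homomorphism `μ : G →* ℂˣ` as a class function, so that it can be compared with the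
elements of `Irr G`. -/
def linearCharacter (μ : G →* ℂˣ) : G → ℂ := fun g ↦ μ g

theorem linearCharacter_injective : Function.Injective (linearCharacter (G := G)) :=
  fun _ _ h ↦ MonoidHom.ext fun g ↦ Units.ext (congrFun h g)

theorem linearCharacter_mul (μ ν : G →* ℂˣ) :
    linearCharacter (μ * ν) = linearCharacter μ * linearCharacter ν := by
  ext g
  simp [linearCharacter]

theorem linearCharacter_inv_mul_cancel (μ : G →* ℂˣ) (f : G → ℂ) :
    linearCharacter μ⁻¹ * (linearCharacter μ * f) = f := by
  ext g
  simp [linearCharacter]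

theorem character_twist_eq_linearCharacter_mul (μ : G →* ℂˣ) {V : Type*} [AddCommGroup V]
    [Module ℂ V] (ρ : Representation ℂ G V) :
    (twist ρ μ).character = linearCharacter μ * ρ.character :=
  funext (character_twist_apply ρ μ)

variable [Finite G]

theorem linearCharacter_mul_mem_Irr (μ : G →* ℂˣ) {f : G → ℂ} (hf : f ∈ Irr G) :
    linearCharacter μ * f ∈ Irr G := by
  have := Fintype.ofFinite G
  obtain ⟨V, _, _, _, ρ, rfl⟩ := exists_character_eq_of_mem_Irr hf
  rw [← character_twist_eq_linearCharacter_mul, character_mem_Irr_iff, ← sum_mul_inv_of_mem_Irr hf]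
  refine Finset.sum_congr rfl fun g _ ↦ ?_
  rw [character_twist_apply, character_twist_apply, mul_mul_mul_comm, ← Units.val_mul, ← map_mul,
    mul_inv_cancel, map_one, Units.val_one, one_mul]

theorem one_mem_Irr : (1 : G → ℂ) ∈ Irr G := by
  have := Fintype.ofFinite G
  have h : (Representation.trivial ℂ G ℂ).character = 1 := funext fun g ↦ by
    refine (LinearMap.trace_id ℂ ℂ).trans ?_
    rw [Module.finrank_self, Nat.cast_one, Pi.one_apply]
  rw [← h, character_mem_Irr_iff, h]
  simp

theorem linearCharacter_mem_Irr (μ : G →* ℂˣ) : linearCharacter μ ∈ Irr G :=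
  mul_one (linearCharacter μ) ▸ linearCharacter_mul_mem_Irr μ one_mem_Irr

/-- The dual of a character `f`, that is, its complex conjugate. -/
def dualCharacter (f : G → ℂ) : G → ℂ := fun g ↦ f g⁻¹

theorem dualCharacter_mem_Irr {f : G → ℂ} (hf : f ∈ Irr G) : dualCharacter f ∈ Irr G := by
  have := Fintype.ofFinite G
  obtain ⟨V, _, _, _, ρ, rfl⟩ := exists_character_eq_of_mem_Irr hf
  have h : ρ.dual.character = dualCharacter ρ.character := funext (char_dual ρ)
  rw [← h, character_mem_Irr_iff, ← sum_mul_inv_of_mem_Irr hf]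
  simp [mul_comm]

end IrreducibleCharacters

section OddOrder

open Representation

variable {G : Type} [Group G]

theorem apply_one_of_mem_Irr {f : G → ℂ} (hf : f ∈ Irr G) : f 1 = charDeg f := by
  obtain ⟨V, _, _, _, ρ, rfl⟩ := exists_character_eq_of_mem_Irr hf
  simp [charDeg]

theorem charDeg_character {V : Type*} [AddCommGroup V] [Module ℂ V] [FiniteDimensional ℂ V]
    (ρ : Representation ℂ G V) : charDeg ρ.character = Module.finrank ℂ V := by
  simp [charDeg]

theorem charDeg_linearCharacter_mul (μ : G →* ℂˣ) (f : G → ℂ) :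
    charDeg (linearCharacter μ * f) = charDeg f := by
  simp [charDeg, linearCharacter]

theorem charDeg_dualCharacter (f : G → ℂ) : charDeg (dualCharacter f) = charDeg f := by
  simp [charDeg, dualCharacter]

theorem charDeg_linearCharacter (μ : G →* ℂˣ) : charDeg (linearCharacter μ) = 1 := by
  simp [charDeg, linearCharacter]

theorem exists_linearCharacter_eq_of_charDeg_eq_one {f : G → ℂ} (hf : f ∈ Irr G)
    (h : charDeg f = 1) : ∃ μ, linearCharacter μ = f := by
  obtain ⟨V, _, _, _, ρ, rfl⟩ := exists_character_eq_of_mem_Irr hf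
  rw [charDeg_character] at h
  exact ⟨detHom ρ, funext fun g ↦ (character_eq_detHom h g).symm⟩

variable [Finite G]

theorem eq_one_of_apply_inv_eq (hodd : Odd (Nat.card G)) {f : G → ℂ} (hf : f ∈ Irr G)
    (hreal : ∀ g, f g⁻¹ = f g) : f = 1 := by
  have := Fintype.ofFinite G
  by_contra hne
  have hsum : ∑ g, f g = 0 := by
    simpa using sum_mul_inv_eq_zero_of_mem_Irr hf one_mem_Irr hne
  have hsq : ∑ g, f (g ^ 2) = ∑ g, f g :=
    (powCoprime (Nat.coprime_two_right.mpr hodd)).sum_comp f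
  obtain ⟨V, _, _, _, ρ, rfl⟩ := exists_character_eq_of_mem_Irr hf
  refine sum_character_pow_two_ne_zero (ρ := ρ) ?_ (hsq.trans hsum)
  rw [← sum_mul_inv_of_mem_Irr hf]
  simp only [hreal]

theorem charDeg_eq_one_of_apply_inv_eq_mul (hodd : Odd (Nat.card G)) {f : G → ℂ} (hf : f ∈ Irr G)
    (μ : G →* ℂˣ) (hμ : ∀ g, f g⁻¹ = μ g * f g) : charDeg f = 1 := by
  obtain ⟨m, hm⟩ := hodd
  let ν := μ ^ (m + 1)
  have hν (g : G) : μ g = ν g * ν g := by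
    have : (m + 1) + (m + 1) = Nat.card G + 1 := by omega
    rw [MonoidHom.pow_apply, ← pow_add, this, pow_succ, ← map_pow, pow_card_eq_one', map_one,
      one_mul]
  have hreal (g : G) : (linearCharacter ν * f) g⁻¹ = (linearCharacter ν * f) g := by
    simp [linearCharacter, hμ, hν, mul_assoc]
  have h := eq_one_of_apply_inv_eq ⟨m, hm⟩ (linearCharacter_mul_mem_Irr ν hf) hreal
  rw [← charDeg_linearCharacter_mul ν f, h]
  simp [charDeg]

theorem charDeg_ne_two (hodd : Odd (Nat.card G)) {f : G → ℂ} (hf : f ∈ Irr G) : charDeg f ≠ 2 := by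
  intro h
  obtain ⟨V, _, _, _, ρ, rfl⟩ := exists_character_eq_of_mem_Irr hf
  have h1 := charDeg_eq_one_of_apply_inv_eq_mul hodd hf (detHom ρ)⁻¹
    (character_inv_of_finrank_eq_two ((charDeg_character ρ).symm.trans h))
  omega

end OddOrder

section Existence

open Subgroup Representation

theorem exists_weight_vector_mul_of_character_twist_eq {k G V : Type*} [Field k] [CharZero k]
    [Group G] [AddCommGroup V] [Module k V] [FiniteDimensional k V] {σ : Representation k G V}
    {T : Subgroup G} [Finite T] {τ : T →* kˣ} (hτ : ∃ w ≠ 0, ∀ t : T, σ t w = τ t • w)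
    {μ : G →* kˣ} (hμ : (twist σ μ).character = σ.character) :
    ∃ w ≠ 0, ∀ t : T, σ t w = (τ t * μ t : kˣ) • w := by
  obtain ⟨w, hw0, hw⟩ := hτ
  let σT : Representation k T V := σ.comp T.subtype
  let twistT : Representation k T V := (twist σ μ).comp T.subtype
  have hχ : twistT.character = σT.character := funext fun t ↦ congrFun hμ t
  have h := (exists_weight_vector_iff twistT (τ * μ.comp T.subtype)).mp ⟨w, hw0, fun t ↦ by
    change twist σ μ t w = (τ t * μ t) • w
    rw [twist_apply, hw, ← Units.smul_def, smul_smul, mul_comm]⟩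
  rw [hχ] at h
  exact (exists_weight_vector_iff σT _).mpr h

theorem finrank_ne_one_of_weight {k G V : Type*} [Field k] [Group G] [AddCommGroup V] [Module k V]
    {σ : Representation k G V} {N : Subgroup G} (hN : N ≤ commutator G) {θ : N →* kˣ} (hθ : θ ≠ 1)
    {w : V} (hw0 : w ≠ 0) (hw : ∀ y : N, σ y w = θ y • w) : Module.finrank k V ≠ 1 := by
  refine fun h ↦ hθ (MonoidHom.ext fun y ↦ Units.ext (smul_left_injective k hw0 ?_))
  change (θ y : k) • w = (1 : k) • w
  rw [← Units.smul_def, ← hw, eq_detHom_smul_id h, apply_eq_one_of_mem_commutator _ (hN y.2),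
    Units.val_one]
  rfl

theorem exists_mem_Irr_ncard_stabilizer_le {p : ℕ} [Fact p.Prime] {G : Type} [Group G] [Finite G]
    (hG : ¬ HasNormalPComplement p G) :
    ∃ f ∈ Irr G, ¬ p ∣ charDeg f ∧ charDeg f ≠ 1 ∧
      {μ | linearCharacter μ * f = f}.ncard ≤ charDeg f := by
  obtain ⟨N, θ, τ, hN, hnormalizer, hindex, hθ, hτ⟩ :=
    exists_extendible_of_not_hasNormalPComplement hG
  obtain ⟨V, _, _, σ, _, hσ, hp, w, hw0, hw⟩ := exists_isIrreducible_weight_vector _ hindex τ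
  refine ⟨σ.character, character_mem_Irr hσ, ?_⟩
  rw [charDeg_character]
  refine ⟨hp, finrank_ne_one_of_weight (σ := σ) hN hθ hw0 fun y ↦ ?_, ?_⟩
  · rw [← hτ, ← hw]
    rfl
  rw [Set.ncard_eq_toFinset_card _ (Set.toFinite _)]
  refine card_le_finrank_of_weights (ρ := σ) hN hnormalizer hτ _ fun μ hμ ↦ ?_
  rw [Set.Finite.mem_toFinset, Set.mem_ofPred_eq, ← character_twist_eq_linearCharacter_mul] at hμ
  exact exists_weight_vector_mul_of_character_twist_eq ⟨w, hw0, hw⟩ hμ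

end Existence

section Counting

variable {G : Type} [Group G]

theorem le_acd_of_sum_nonneg {S : Set (G → ℂ)} (hS : S.Finite) (hne : S.Nonempty) {c : ℝ}
    (h : 0 ≤ ∑ f ∈ hS.toFinset, ((f 1).re - c)) : c ≤ acd S := by
  have hpos : (0 : ℝ) < S.ncard := by exact_mod_cast (Set.ncard_pos hS).mpr hne
  rw [Finset.sum_sub_distrib, Finset.sum_const, nsmul_eq_mul, ← Set.ncard_eq_toFinset_card S hS,
    sub_nonneg, mul_comm] at h
  rwa [acd, finsum_mem_eq_finite_toFinset_sum _ hS, le_div_iff₀ hpos]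

/-- The orbit of `f` under multiplication by linear characters. -/
def twistOrbit (f : G → ℂ) : Set (G → ℂ) := Set.range fun μ ↦ linearCharacter μ * f

theorem charDeg_eq_of_mem_twistOrbit {f f' : G → ℂ} (h : f' ∈ twistOrbit f) :
    charDeg f' = charDeg f := by
  obtain ⟨μ, rfl⟩ := h
  exact charDeg_linearCharacter_mul μ f

theorem stabilizer_dualCharacter (f : G → ℂ) :
    {μ | linearCharacter μ * dualCharacter f = dualCharacter f} =
      {μ | linearCharacter μ * f = f} := by
  ext μ
  simp only [Set.mem_ofPred_eq, funext_iff, Pi.mul_apply, linearCharacter, dualCharacter]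
  refine inv_surjective.forall.trans (forall_congr' fun g ↦ ?_)
  rw [inv_inv, map_inv, Units.val_inv_eq_inv_val, inv_mul_eq_iff_eq_mul₀ (Units.ne_zero _), eq_comm]

theorem ncard_mul_sub_le_sum {c : ℝ} {d : ℕ} {S : Finset (G → ℂ)} {O : Set (G → ℂ)}
    (hirr : ∀ f ∈ S, f ∈ Irr G) (hc : ∀ f ∈ S, c ≤ charDeg f) (hOS : O ⊆ S)
    (hO : ∀ f ∈ O, charDeg f = d) : O.ncard * (d - c) ≤ ∑ f ∈ S, ((f 1).re - c) := by
  have hfin := S.finite_toSet.subset hOS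
  have hsub : hfin.toFinset ⊆ S := fun f hf ↦ hOS (hfin.mem_toFinset.mp hf)
  have hre (f) (hf : f ∈ S) : (f 1).re = charDeg f := by
    rw [apply_one_of_mem_Irr (hirr f hf), Complex.natCast_re]
  calc (O.ncard * (d - c) : ℝ)
    _ = ∑ f ∈ hfin.toFinset, ((f 1).re - c) := by
      rw [Set.ncard_eq_toFinset_card O hfin, ← nsmul_eq_mul]
      refine (Finset.sum_eq_card_nsmul fun f hf ↦ ?_).symm
      rw [hre f (hsub hf), hO f (hfin.mem_toFinset.mp hf)]
    _ ≤ ∑ f ∈ S, ((f 1).re - c) :=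
      Finset.sum_le_sum_of_subset_of_nonneg hsub fun f hf _ ↦
        sub_nonneg.mpr ((hc f hf).trans_eq (hre f hf).symm)

variable [Finite G]

theorem mem_Irr_of_mem_twistOrbit {f f' : G → ℂ} (hf : f ∈ Irr G) (h : f' ∈ twistOrbit f) :
    f' ∈ Irr G := by
  obtain ⟨μ, rfl⟩ := h
  exact linearCharacter_mul_mem_Irr μ hf

theorem finite_twistOrbit (f : G → ℂ) : (twistOrbit f).Finite :=
  Set.finite_range _

theorem card_le_ncard_stabilizer_mul_ncard_twistOrbit (f : G → ℂ) :
    Nat.card (G →* ℂˣ) ≤ {μ | linearCharacter μ * f = f}.ncard * (twistOrbit f).ncard := by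
  classical
  have := Fintype.ofFinite (G →* ℂˣ)
  have horbit : twistOrbit f = Finset.univ.image fun μ ↦ linearCharacter μ * f := by
    simp [twistOrbit]
  rw [Nat.card_eq_fintype_card, horbit, Set.ncard_coe_finset]
  refine Finset.card_le_mul_card_image _ _ fun f' hf' ↦ ?_
  obtain ⟨ν, -, rfl⟩ := Finset.mem_image.mp hf'
  rw [← Set.ncard_coe_finset, ← Set.ncard_image_of_injective _ (mul_right_injective ν⁻¹)]
  refine Set.ncard_le_ncard ?_ (Set.toFinite _)
  rintro _ ⟨μ, hμ, rfl⟩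
  have hμ : linearCharacter μ * f = linearCharacter ν * f := (Finset.mem_filter.mp hμ).2
  rw [Set.mem_ofPred_eq, linearCharacter_mul, mul_assoc, hμ, linearCharacter_inv_mul_cancel]

theorem disjoint_twistOrbit_dualCharacter (hodd : Odd (Nat.card G)) {f : G → ℂ} (hf : f ∈ Irr G)
    (h1 : charDeg f ≠ 1) : Disjoint (twistOrbit f) (twistOrbit (dualCharacter f)) := by
  rw [Set.disjoint_left]
  rintro _ ⟨μ, rfl⟩ ⟨ν, h⟩
  refine h1 (charDeg_eq_one_of_apply_inv_eq_mul hodd hf (ν⁻¹ * μ) fun g ↦ ?_)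
  have h := congrFun (congrArg (linearCharacter ν⁻¹ * ·) h) g
  rwa [linearCharacter_inv_mul_cancel, ← mul_assoc, ← linearCharacter_mul] at h

theorem two_mul_card_le (hodd : Odd (Nat.card G)) {f : G → ℂ} (hf : f ∈ Irr G)
    (h1 : charDeg f ≠ 1) (hstab : {μ | linearCharacter μ * f = f}.ncard ≤ charDeg f) :
    2 * Nat.card (G →* ℂˣ) ≤
      charDeg f * (twistOrbit f ∪ twistOrbit (dualCharacter f)).ncard := by
  rw [Set.ncard_union_eq (disjoint_twistOrbit_dualCharacter hodd hf h1) (finite_twistOrbit _)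
    (finite_twistOrbit _), mul_add, two_mul]
  have h (f') := card_le_ncard_stabilizer_mul_ncard_twistOrbit (G := G) f'
  refine add_le_add ((h f).trans ?_) ((h (dualCharacter f)).trans ?_)
  · gcongr
  · rw [stabilizer_dualCharacter]
    gcongr

theorem three_le_charDeg (hodd : Odd (Nat.card G)) {f : G → ℂ} (hf : f ∈ Irr G) {p : ℕ}
    (hp : ¬ p ∣ charDeg f) (h1 : charDeg f ≠ 1) : 3 ≤ charDeg f := by
  have h0 : charDeg f ≠ 0 := fun h ↦ hp (h ▸ dvd_zero p)
  have h2 := charDeg_ne_two hodd hf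
  omega

theorem ncard_charDeg_eq_one : {f ∈ Irr G | charDeg f = 1}.ncard = Nat.card (G →* ℂˣ) := by
  have : {f ∈ Irr G | charDeg f = 1} = Set.range (linearCharacter (G := G)) := by
    ext f
    constructor
    · rintro ⟨hf, h1⟩
      exact exists_linearCharacter_eq_of_charDeg_eq_one hf h1
    · rintro ⟨μ, rfl⟩
      exact ⟨linearCharacter_mem_Irr μ, charDeg_linearCharacter μ⟩
  rw [this, ← Set.image_univ, Set.ncard_image_of_injective _ linearCharacter_injective,
    Set.ncard_univ]

theorem sum_linear_sub (c : ℝ) {S : Finset (G → ℂ)}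
    (hS : (S : Set (G → ℂ)) = {f ∈ Irr G | charDeg f = 1}) :
    ∑ f ∈ S, ((f 1).re - c) = Nat.card (G →* ℂˣ) * (1 - c) := by
  rw [← ncard_charDeg_eq_one, ← hS, Set.ncard_coe_finset, ← nsmul_eq_mul]
  refine Finset.sum_eq_card_nsmul fun f hf ↦ ?_
  obtain ⟨hf, h1⟩ := hS.subset hf
  rw [apply_one_of_mem_Irr hf, h1, Nat.cast_one, Complex.one_re]

theorem nine_fifths_le_acd (hodd : Odd (Nat.card G)) {p : ℕ} (hp1 : p ≠ 1) {f : G → ℂ}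
    (hf : f ∈ Irr G) (hp : ¬ p ∣ charDeg f) (h1 : charDeg f ≠ 1)
    (hstab : {μ | linearCharacter μ * f = f}.ncard ≤ charDeg f) :
    9 / 5 ≤ acd {f ∈ Irr G | ¬ p ∣ charDeg f} := by
  have hfin : {f ∈ Irr G | ¬ p ∣ charDeg f}.Finite := finite_Irr.subset fun _ h ↦ h.1
  let linear := {f ∈ hfin.toFinset | charDeg f = 1}
  let nonlinear := {f ∈ hfin.toFinset | charDeg f ≠ 1}
  have hlinear : (linear : Set (G → ℂ)) = {f ∈ Irr G | charDeg f = 1} := by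
    ext f
    have (h : charDeg f = 1) : ¬ p ∣ charDeg f := by rwa [h, Nat.dvd_one]
    simp only [linear, Finset.coe_filter, Set.Finite.mem_toFinset, Set.mem_ofPred_eq]
    tauto
  have hnonlinear (f) : f ∈ nonlinear ↔ (f ∈ Irr G ∧ ¬ p ∣ charDeg f) ∧ charDeg f ≠ 1 := by
    simp only [nonlinear, Finset.mem_filter, Set.Finite.mem_toFinset, Set.mem_ofPred_eq]
  let O := twistOrbit f ∪ twistOrbit (dualCharacter f)
  have hO (f') (h : f' ∈ O) : f' ∈ Irr G ∧ charDeg f' = charDeg f := by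
    rcases h with h | h
    · exact ⟨mem_Irr_of_mem_twistOrbit hf h, charDeg_eq_of_mem_twistOrbit h⟩
    · exact ⟨mem_Irr_of_mem_twistOrbit (dualCharacter_mem_Irr hf) h,
        (charDeg_eq_of_mem_twistOrbit h).trans (charDeg_dualCharacter f)⟩
  have hthree (f) (h : f ∈ nonlinear) : (3 : ℝ) ≤ charDeg f := by
    obtain ⟨⟨hf, hp⟩, h1⟩ := (hnonlinear f).mp h
    exact_mod_cast three_le_charDeg hodd hf hp h1
  have hsum : O.ncard * (charDeg f - 9 / 5) ≤ ∑ f ∈ nonlinear, ((f 1).re - 9 / 5) :=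
    ncard_mul_sub_le_sum (fun f h ↦ ((hnonlinear f).mp h).1.1)
      (fun f h ↦ by linarith [hthree f h])
      (fun f' h ↦ (hnonlinear f').mpr ⟨⟨(hO f' h).1, (hO f' h).2 ▸ hp⟩, (hO f' h).2 ▸ h1⟩)
      fun f' h ↦ (hO f' h).2
  have hcard : (2 * Nat.card (G →* ℂˣ) : ℝ) ≤ charDeg f * O.ncard := by
    exact_mod_cast two_mul_card_le hodd hf h1 hstab
  refine le_acd_of_sum_nonneg hfin ⟨f, hf, hp⟩ ?_
  rw [← Finset.sum_filter_add_sum_filter_not _ (charDeg · = 1), sum_linear_sub _ hlinear]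
  nlinarith [hthree f ((hnonlinear f).mpr ⟨⟨hf, hp⟩, h1⟩), (Nat.cast_nonneg O.ncard : (0 : ℝ) ≤ _)]

end Counting

theorem odd_order_avg_sevenprime_lt_implies_sevenNilpotent_general (p : ℕ) [Fact p.Prime]
    (G : Type) [Group G] [Finite G] (hodd : Odd (Nat.card G))
    (h : acd {f ∈ Irr G | ¬ p ∣ charDeg f} < 9 / 5) : HasNormalPComplement p G := by
  by_contra hG
  obtain ⟨f, hf, hp, h1, hstab⟩ := exists_mem_Irr_ncard_stabilizer_le hG
  exact h.not_ge (nine_fifths_le_acd hodd (Nat.Prime.ne_one Fact.out) hf hp h1 hstab)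

theorem odd_order_avg_sevenprime_lt_implies_sevenNilpotent
    (G : Type) [Group G] [Fintype G] (hodd : Odd (Nat.card G))
    (h : acd {f ∈ Irr G | ¬ 7 ∣ charDeg f} < 9 / 5) :
    HasNormalPComplement 7 G :=
  have : Fact (Nat.Prime 7) := ⟨by norm_num⟩
  odd_order_avg_sevenprime_lt_implies_sevenNilpotent_general 7 G hodd h
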